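/- arXiv:2110.12431 — 2 statements merged into one kernel-verified Lean document; each statement's English description precedes it below -/
import Mathlib

section
/- Let G be a group acting geometrically (i.e., metrically properly and cocompactly) by automorphisms on a locally finite Helly graph X. Then every torsion subgroup of G is finite. -/
open SimpleGraph Pointwise

/-- A Helly graph: a connected simple graph in which every family of pairwise
intersecting combinatorial balls has a common point. -/
def IsHellyGraph {V : Type*} (Γ : SimpleGraph V) : Prop :=
  Γ.Connected ∧
  ∀ S : Set (V × ℕ),
    (∀ p ∈ S, ∀ q ∈ S, ∃ y : V, Γ.dist p.1 y ≤ p.2 ∧ Γ.dist q.1 y ≤ q.2) →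
    ∃ y : V, ∀ p ∈ S, Γ.dist p.1 y ≤ p.2

/-!
Let `S` be a finite symmetric set in a torsion group acting as in the theorem, and let `θ` bound its
joint translation length (drift). The function `u ↦ inf {d(u, g x) + θ n : g ∈ Sⁿ}`, shifted by a
constant and averaged with its conjugate, gives an approximate point `f` of the injective hull
which no element of `S` moves by more than `θ`.

If `1 ≤ θ` and the drift cannot be lowered by `1 / K`, some word of length `K` increases `f` at
almost the maximal rate `θ` at a vertex `o`. By the Helly property the path of translates of `f`
along this word is shadowed by vertices `h i • w i`, where the `w i` all lie in a fixed ball and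
`d(o, h i • w i)` grows like `i θ` with bounded error. The descending link of a vertex determines
how geodesics from `o` continue beyond it, so once `w i`, the link and the error repeat, which
happens if `K` is large compared with the size of the balls, the intermediate subword can be pumped
and has infinite order. As `K` does not depend on `S`, the drift descends to `1`, and a vertex near
the corresponding `f` is moved by at most `6` by every element of `S`. A uniform bound on the number
of such elements bounds the group.
-/

section Metric

open Set

variable {V : Type*} {Γ : SimpleGraph V}

lemma exists_dist_le_dist_le_of_walk {a b : V} (p : Γ.Walk a b) {r s : ℕ}
    (hp : p.length ≤ r + s) : ∃ y, Γ.dist a y ≤ r ∧ Γ.dist b y ≤ s := by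
  refine ⟨p.getVert r, (dist_le (p.take r)).trans ?_, ?_⟩
  · rw [Walk.take_length]; exact min_le_left _ _
  · rw [dist_comm]
    refine (dist_le (p.drop r)).trans ?_
    rw [Walk.drop_length]; omega

lemma IsHellyGraph.exists_forall_dist_le (hΓ : IsHellyGraph Γ) {ι : Type*} (c : ι → V)
    (r : ι → ℕ) (h : ∀ i j, Γ.dist (c i) (c j) ≤ r i + r j) : ∃ y, ∀ i, Γ.dist (c i) y ≤ r i := by
  obtain ⟨y, hy⟩ := hΓ.2 (range fun i => (c i, r i)) (by
    rintro _ ⟨i, rfl⟩ _ ⟨j, rfl⟩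
    obtain ⟨p, hp⟩ := hΓ.1.exists_walk_length_eq_dist (c i) (c j)
    exact exists_dist_le_dist_le_of_walk p (hp.trans_le (h i j)))
  exact ⟨y, fun i => hy _ ⟨i, rfl⟩⟩

lemma IsHellyGraph.exists_path_of_radii (hΓ : IsHellyGraph Γ) (r : ℕ → V → ℕ) (τ : ℕ → ℕ)
    (hr : ∀ i u v, Γ.dist u v ≤ r i u + r i v) (hτ : ∀ i u, r i u ≤ r (i + 1) u + τ i) :
    ∃ z : ℕ → V, (∀ i u, Γ.dist u (z i) ≤ r i u) ∧ ∀ i, Γ.dist (z i) (z (i + 1)) ≤ τ i := by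
  have hstep : ∀ i z, (∀ u, Γ.dist u z ≤ r i u) →
      ∃ z', (∀ u, Γ.dist u z' ≤ r (i + 1) u) ∧ Γ.dist z z' ≤ τ i := by
    intro i z hz
    have hzτ (u : V) : Γ.dist u z ≤ r (i + 1) u + τ i := (hz u).trans (hτ i u)
    obtain ⟨z', hz'⟩ := hΓ.exists_forall_dist_le (fun u : Option V => u.getD z)
      (fun u => u.elim (τ i) (r (i + 1))) (by
        rintro (_ | u) (_ | v)
        · simp
        · simpa [dist_comm, add_comm] using hzτ v
        · exact hzτ u
        · exact hr (i + 1) u v)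
    exact ⟨z', fun u => hz' (some u), hz' none⟩
  have : Nonempty V := hΓ.1.nonempty
  choose! next hnext_dist hnext_step using hstep
  obtain ⟨z₀, hz₀⟩ := hΓ.exists_forall_dist_le id (r 0) (hr 0)
  let z : ℕ → V := Nat.rec z₀ next
  have hz : ∀ i u, Γ.dist u (z i) ≤ r i u := by
    intro i
    induction i with
    | zero => exact hz₀
    | succ i ih => exact hnext_dist i (z i) ih
  exact ⟨z, hz, fun i => hnext_step i (z i) (hz i)⟩

end Metric

section DescendingLink

open Set

variable {V : Type*} {Γ : SimpleGraph V} {G : Type*} [Group G] [MulAction G V]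

lemma graph_dist_smul_smul (hact : ∀ (g : G) (u v : V), Γ.Adj (g • u) (g • v) ↔ Γ.Adj u v)
    (g : G) (u v : V) : Γ.dist (g • u) (g • v) = Γ.dist u v := by
  have hlengths : range (Walk.length : Γ.Walk (g • u) (g • v) → ℕ) =
      range (Walk.length : Γ.Walk u v → ℕ) := by
    let φ (k : G) : Γ →g Γ := ⟨(k • ·), (hact k _ _).2⟩
    apply Subset.antisymm
    · rintro _ ⟨p, rfl⟩
      exact ⟨(p.map (φ g⁻¹)).copy (inv_smul_smul g u) (inv_smul_smul g v), by simp⟩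
    · rintro _ ⟨p, rfl⟩
      exact ⟨p.map (φ g), by simp⟩
  rw [dist_eq_sInf, dist_eq_sInf, hlengths]

/-- The neighbours of `z` that are closer to `o` than `z` is. It plays the role of the cone type
of `z` in an automaton recognising geodesics. The condition `dist v z ≤ 1` amounts to adjacency,
since `z` itself is not closer to `o`. -/
def descendingLink (Γ : SimpleGraph V) (o z : V) : Set V :=
  {v | Γ.dist v z ≤ 1 ∧ Γ.dist o v < Γ.dist o z}

lemma smul_descendingLink (hact : ∀ (g : G) (u v : V), Γ.Adj (g • u) (g • v) ↔ Γ.Adj u v)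
    (g : G) (o z : V) : g • descendingLink Γ o z = descendingLink Γ (g • o) (g • z) := by
  ext v
  obtain ⟨u, rfl⟩ := MulAction.surjective g v
  simp only [smul_mem_smul_set_iff, descendingLink, mem_ofPred_eq, graph_dist_smul_smul hact]

lemma IsHellyGraph.exists_mem_descendingLink (hΓ : IsHellyGraph Γ) {o z u : V} {k : ℕ}
    (hoz : 0 < Γ.dist o z) (hou : Γ.dist o u + 1 ≤ Γ.dist o z + k) (hzu : Γ.dist z u ≤ k + 1) :
    ∃ v ∈ descendingLink Γ o z, Γ.dist v u ≤ k := by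
  obtain ⟨v, hv⟩ := hΓ.exists_forall_dist_le ![o, z, u] ![Γ.dist o z - 1, 1, k] (by
    have := Γ.dist_comm (u := o) (v := z)
    have := Γ.dist_comm (u := o) (v := u)
    have := Γ.dist_comm (u := z) (v := u)
    intro i j
    fin_cases i <;> fin_cases j <;> simp <;> omega)
  have hov : Γ.dist o v ≤ Γ.dist o z - 1 := hv 0
  have hzv : Γ.dist z v ≤ 1 := hv 1
  have huv : Γ.dist u v ≤ k := hv 2
  exact ⟨v, ⟨dist_comm.trans_le hzv, by omega⟩, dist_comm.trans_le huv⟩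

lemma IsHellyGraph.descendingLink_nonempty_iff (hΓ : IsHellyGraph Γ) {o z : V} :
    (descendingLink Γ o z).Nonempty ↔ 0 < Γ.dist o z := by
  refine ⟨fun ⟨v, _, hv⟩ => by omega, fun h => ?_⟩
  obtain ⟨v, hv, -⟩ := hΓ.exists_mem_descendingLink (u := o) (k := Γ.dist o z) h
    (by rw [dist_self]; omega) (dist_comm.trans_le (by omega))
  exact ⟨v, hv⟩

lemma IsHellyGraph.dist_eq_add_of_descendingLink_eq (hΓ : IsHellyGraph Γ) {o o' z w : V}
    (hlink : descendingLink Γ o z = descendingLink Γ o' z)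
    (ho : Γ.dist o w = Γ.dist o z + Γ.dist z w) :
    Γ.dist o' w = Γ.dist o' z + Γ.dist z w := by
  refine le_antisymm hΓ.1.dist_triangle (not_lt.1 fun hlt => ?_)
  have hpos : 0 < Γ.dist o' z := by
    by_contra! h
    obtain rfl := hΓ.1.dist_eq_zero_iff.1 (Nat.le_zero.1 h)
    simp at hlt
  obtain ⟨v, hv, hvw⟩ := hΓ.exists_mem_descendingLink hpos hlt (Nat.le_succ _)
  rw [← hlink] at hv
  have := hv.2
  have := hΓ.1.dist_triangle (u := o) (v := v) (w := w)
  omega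

lemma IsHellyGraph.mem_descendingLink_iff (hΓ : IsHellyGraph Γ) {o z w v : V}
    (hoz : 0 < Γ.dist o z) (ho : Γ.dist o w = Γ.dist o z + Γ.dist z w) :
    v ∈ descendingLink Γ o w ↔
      Γ.dist v w ≤ 1 ∧ ∃ u ∈ descendingLink Γ o z, Γ.dist u v ≤ Γ.dist z w := by
  refine and_congr_right fun hvw => ⟨fun hv => ?_, fun ⟨u, hu, huv⟩ => ?_⟩
  · refine hΓ.exists_mem_descendingLink hoz (by omega) ?_
    have := hΓ.1.dist_triangle (u := z) (v := w) (w := v)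
    have := Γ.dist_comm (u := v) (v := w)
    omega
  · have := hu.2
    have := hΓ.1.dist_triangle (u := o) (v := u) (w := v)
    omega

lemma IsHellyGraph.descendingLink_eq_of_dist_eq_add (hΓ : IsHellyGraph Γ) {o o' z w : V}
    (hlink : descendingLink Γ o z = descendingLink Γ o' z)
    (ho : Γ.dist o w = Γ.dist o z + Γ.dist z w) :
    descendingLink Γ o w = descendingLink Γ o' w := by
  have hpos : 0 < Γ.dist o z ↔ 0 < Γ.dist o' z := by
    rw [← hΓ.descendingLink_nonempty_iff, hlink, hΓ.descendingLink_nonempty_iff]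
  by_cases hoz : 0 < Γ.dist o z
  · ext v
    rw [hΓ.mem_descendingLink_iff hoz ho, hΓ.mem_descendingLink_iff (hpos.1 hoz)
      (hΓ.dist_eq_add_of_descendingLink_eq hlink ho), hlink]
  · have ho_eq : o = z := hΓ.1.dist_eq_zero_iff.1 (Nat.eq_zero_of_not_pos hoz)
    have ho'_eq : o' = z := hΓ.1.dist_eq_zero_iff.1 (Nat.eq_zero_of_not_pos (hpos.not.1 hoz))
    rw [ho_eq, ho'_eq]

/-- Pumping: the translates `h ^ n • z` lie on a geodesic issuing from `o`. -/
lemma IsHellyGraph.not_isOfFinOrder_of_descendingLink_eq (hΓ : IsHellyGraph Γ)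
    (hact : ∀ (g : G) (u v : V), Γ.Adj (g • u) (g • v) ↔ Γ.Adj u v) {o z : V} {h : G}
    (hpos : 0 < Γ.dist z (h • z)) (hgeod : Γ.dist o (h • z) = Γ.dist o z + Γ.dist z (h • z))
    (hlink : descendingLink Γ o (h • z) = descendingLink Γ (h • o) (h • z)) :
    ¬ IsOfFinOrder h := by
  have hdist_pow (n : ℕ) (u : V) : Γ.dist (h ^ n • u) (h ^ (n + 1) • z) = Γ.dist u (h • z) := by
    rw [pow_succ, mul_smul, graph_dist_smul_smul hact]
  have horbit : ∀ n : ℕ, Γ.dist o (h ^ n • z) = Γ.dist o z + n * Γ.dist z (h • z) ∧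
      descendingLink Γ o (h ^ n • z) = descendingLink Γ (h ^ n • o) (h ^ n • z) := by
    intro n
    induction n with
    | zero => simp
    | succ n ih =>
      obtain ⟨ihdist, ihlink⟩ := ih
      have hgeod_pow : Γ.dist (h ^ n • o) (h ^ (n + 1) • z) =
          Γ.dist (h ^ n • o) (h ^ n • z) + Γ.dist (h ^ n • z) (h ^ (n + 1) • z) := by
        rw [hdist_pow, hdist_pow, graph_dist_smul_smul hact, hgeod]
      constructor
      · rw [hΓ.dist_eq_add_of_descendingLink_eq ihlink.symm hgeod_pow, ihdist, hdist_pow]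
        ring
      · rw [← hΓ.descendingLink_eq_of_dist_eq_add ihlink.symm hgeod_pow, pow_succ, mul_smul,
          mul_smul, ← smul_descendingLink hact, hlink, smul_descendingLink hact]
  intro hfin
  obtain ⟨n, hn, hn_one⟩ := isOfFinOrder_iff_pow_eq_one.1 hfin
  have hreturn := (horbit n).1
  rw [hn_one, one_smul] at hreturn
  have : 0 < n * Γ.dist z (h • z) := Nat.mul_pos hn hpos
  omega

end DescendingLink

section DominatesDist

variable {V : Type*} {Γ : SimpleGraph V} {f : V → ℝ}

/-- A function dominating the distance: the closed balls of radius `f u` about `u` intersect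
pairwise in the injective hull. Such functions form the space usually denoted `Δ(V)`. -/
def DominatesDist (Γ : SimpleGraph V) (f : V → ℝ) : Prop :=
  ∀ u v, (Γ.dist u v : ℝ) ≤ f u + f v

/-- The conjugate `f*` of a function `f` on the vertices; `f = f*` characterises the points of the
injective hull. It is meaningful when `f` dominates the distance, which makes the supremum
bounded. -/
noncomputable def distConjugate (Γ : SimpleGraph V) (f : V → ℝ) (u : V) : ℝ :=
  ⨆ v, ((Γ.dist u v : ℝ) - f v)

/-- A function dominating the distance which is, up to an additive error of `2`, a point of the
injective hull. -/
structure IsAlmostExtremal (Γ : SimpleGraph V) (f : V → ℝ) : Prop where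
  dominatesDist : DominatesDist Γ f
  exists_add_le : ∀ u, ∃ v, f u + f v ≤ Γ.dist u v + 2

lemma DominatesDist.nonneg (hf : DominatesDist Γ f) (u : V) : 0 ≤ f u := by
  have := hf u u
  rw [dist_self, Nat.cast_zero] at this
  linarith

lemma DominatesDist.sub_le_distConjugate (hf : DominatesDist Γ f) (u v : V) :
    (Γ.dist u v : ℝ) - f v ≤ distConjugate Γ f u :=
  le_ciSup (f := fun v => (Γ.dist u v : ℝ) - f v)
    ⟨f u, by rintro _ ⟨w, rfl⟩; exact sub_le_iff_le_add.2 (hf u w)⟩ v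

lemma distConjugate_le {u : V} {c : ℝ} (h : ∀ v, (Γ.dist u v : ℝ) - f v ≤ c) :
    distConjugate Γ f u ≤ c :=
  have : Nonempty V := ⟨u⟩
  ciSup_le h

lemma DominatesDist.distConjugate_le_self (hf : DominatesDist Γ f) : distConjugate Γ f ≤ f :=
  fun u => distConjugate_le fun v => sub_le_iff_le_add.2 (hf u v)

lemma DominatesDist.distConjugate_anti {f' : V → ℝ} (hf' : DominatesDist Γ f') (h : f' ≤ f) :
    distConjugate Γ f ≤ distConjugate Γ f' :=
  fun u => distConjugate_le fun v =>
    (sub_le_sub_left (h v) _).trans (hf'.sub_le_distConjugate u v)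

lemma DominatesDist.half_add_distConjugate (hf : DominatesDist Γ f) :
    DominatesDist Γ fun u => (f u + distConjugate Γ f u) / 2 := by
  intro u v
  have huv := hf.sub_le_distConjugate u v
  have hvu := hf.sub_le_distConjugate v u
  rw [dist_comm] at hvu
  linarith

lemma DominatesDist.isAlmostExtremal (hf : DominatesDist Γ f)
    (hgap : ∀ u, f u ≤ distConjugate Γ f u + 1) : IsAlmostExtremal Γ f where
  dominatesDist := hf
  exists_add_le u := by
    have : Nonempty V := ⟨u⟩
    have hlt : f u - 2 < distConjugate Γ f u := by linarith [hgap u]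
    obtain ⟨v, hv⟩ := exists_lt_of_lt_ciSup hlt
    exact ⟨v, by linarith⟩

lemma IsAlmostExtremal.le_dist_add_four (hf : IsAlmostExtremal Γ f) (hΓ : Γ.Connected) {w : V}
    (hw : ∀ u, (Γ.dist u w : ℝ) ≤ f u + 2) (u : V) : f u ≤ Γ.dist u w + 4 := by
  obtain ⟨v, hv⟩ := hf.exists_add_le u
  have htri : (Γ.dist u v : ℝ) ≤ Γ.dist u w + Γ.dist v w := by
    rw [dist_comm (u := v)]
    exact_mod_cast hΓ.dist_triangle
  linarith [hw v]

lemma IsAlmostExtremal.dist_le_six (hf : IsAlmostExtremal Γ f) (hΓ : Γ.Connected) {w w' : V}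
    (hw : ∀ u, (Γ.dist u w : ℝ) ≤ f u + 2) (hw' : ∀ u, (Γ.dist u w' : ℝ) ≤ f u + 2) :
    Γ.dist w w' ≤ 6 := by
  have hfw := hf.le_dist_add_four hΓ hw w
  rw [dist_self, Nat.cast_zero] at hfw
  have : (Γ.dist w w' : ℝ) ≤ 6 := by linarith [hw' w]
  exact_mod_cast this

lemma DominatesDist.exists_dist_le_add_one (hf : DominatesDist Γ f) (hΓ : IsHellyGraph Γ) :
    ∃ z, ∀ u, (Γ.dist u z : ℝ) ≤ f u + 1 := by
  obtain ⟨z, hz⟩ := hΓ.exists_forall_dist_le id (fun u => ⌊f u⌋₊ + 1) (fun u v => by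
    have hu := Nat.lt_floor_add_one (f u)
    have hv := Nat.lt_floor_add_one (f v)
    have : (Γ.dist u v : ℝ) ≤ ((⌊f u⌋₊ + 1 + (⌊f v⌋₊ + 1) : ℕ) : ℝ) := by
      push_cast
      linarith [hf u v]
    exact_mod_cast this)
  refine ⟨z, fun u => ?_⟩
  calc (Γ.dist u z : ℝ) ≤ ((⌊f u⌋₊ + 1 : ℕ) : ℝ) := by exact_mod_cast hz u
    _ ≤ f u + 1 := by
      push_cast
      linarith [Nat.floor_le (hf.nonneg u)]

lemma floor_add_add_one_sub_floor_mem_Icc {a b : ℝ} (ha : 0 ≤ a) (hb : 0 ≤ b) :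
    ((⌊a + b⌋₊ + 1 - ⌊b⌋₊ : ℕ) : ℝ) ∈ Set.Icc a (a + 2) := by
  have hle : ⌊b⌋₊ ≤ ⌊a + b⌋₊ + 1 :=
    (Nat.floor_le_floor (le_add_of_nonneg_left ha)).trans (Nat.le_succ _)
  rw [Nat.cast_sub hle, Nat.cast_add, Nat.cast_one]
  constructor
  · linarith [Nat.floor_le hb, Nat.lt_floor_add_one (a + b)]
  · linarith [Nat.floor_le (add_nonneg ha hb), Nat.lt_floor_add_one b]

/-- Rounding a path in the injective hull to a path of vertices. -/
lemma IsHellyGraph.exists_path_near (hΓ : IsHellyGraph Γ) {p : ℕ → V → ℝ} {θ : ℝ} (hθ : 0 ≤ θ)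
    (hp : ∀ i, DominatesDist Γ (p i)) (hstep : ∀ i u, p i u ≤ p (i + 1) u + θ) :
    ∃ z : ℕ → V, (∀ i u, (Γ.dist u (z i) : ℝ) ≤ p i u + 2) ∧
      ∀ i j, i ≤ j → Γ.dist (z i) (z j) + ⌊i * θ⌋₊ ≤ ⌊j * θ⌋₊ := by
  -- The offset `i * θ` keeps the rounding errors from accumulating along the path.
  let r (i : ℕ) (u : V) : ℕ := ⌊p i u + i * θ⌋₊ + 1 - ⌊i * θ⌋₊
  have hr (i : ℕ) (u : V) : (r i u : ℝ) ∈ Set.Icc (p i u) (p i u + 2) :=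
    floor_add_add_one_sub_floor_mem_Icc ((hp i).nonneg u) (by positivity)
  have hr_dist (i : ℕ) (u v : V) : Γ.dist u v ≤ r i u + r i v := by
    have : (Γ.dist u v : ℝ) ≤ r i u + r i v := by linarith [hp i u v, (hr i u).1, (hr i v).1]
    exact_mod_cast this
  have hmono (i : ℕ) : ⌊i * θ⌋₊ ≤ ⌊(i + 1 : ℕ) * θ⌋₊ := by
    gcongr
    exact i.le_succ
  have hr_step (i : ℕ) (u : V) : r i u ≤ r (i + 1) u + (⌊(i + 1 : ℕ) * θ⌋₊ - ⌊i * θ⌋₊) := by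
    have : ⌊p i u + i * θ⌋₊ ≤ ⌊p (i + 1) u + (i + 1 : ℕ) * θ⌋₊ := by
      apply Nat.floor_le_floor
      push_cast
      linarith [hstep i u]
    have : ⌊(i + 1 : ℕ) * θ⌋₊ ≤ ⌊p (i + 1) u + (i + 1 : ℕ) * θ⌋₊ :=
      Nat.floor_le_floor (le_add_of_nonneg_left ((hp (i + 1)).nonneg u))
    have := hmono i
    simp only [r]
    omega
  obtain ⟨z, hz, hz_step⟩ := hΓ.exists_path_of_radii r _ hr_dist hr_step
  refine ⟨z, fun i u => le_trans (by exact_mod_cast hz i u) (hr i u).2, fun i j hij => ?_⟩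
  induction j, hij using Nat.le_induction with
  | base => rw [dist_self, zero_add]
  | succ j _ ih =>
    have := hz_step j
    have := hmono j
    have := hΓ.1.dist_triangle (u := z i) (v := z j) (w := z (j + 1))
    omega

end DominatesDist

section Displacement

open Set

variable {V : Type*} {Γ : SimpleGraph V} {G : Type*} [Group G] [MulAction G V]
  {S : Set G} {f : V → ℝ} {θ : ℝ} {x : V}

/-- The elements of `S` increase `f` by at most `θ`. When `S` is symmetric this says that they
displace `f` by at most `θ` in the supremum norm. -/
def DisplacesLE (S : Set G) (f : V → ℝ) (θ : ℝ) : Prop :=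
  ∀ g ∈ S, ∀ u, f (g • u) ≤ f u + θ

/-- Products of `n` elements of `S` displace `x` by at most `θ * n` up to an additive constant:
the joint translation length of `S` is at most `θ`. -/
def HasDriftLE (Γ : SimpleGraph V) (S : Set G) (x : V) (θ : ℝ) : Prop :=
  ∃ c : ℝ, ∀ n : ℕ, ∀ g ∈ S ^ n, (Γ.dist x (g • x) : ℝ) ≤ θ * n + c

lemma HasDriftLE.mono {θ' : ℝ} (h : HasDriftLE Γ S x θ) (hθ : θ ≤ θ') : HasDriftLE Γ S x θ' := by
  obtain ⟨c, hc⟩ := h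
  exact ⟨c, fun n g hg => (hc n g hg).trans (by gcongr)⟩

lemma DisplacesLE.pow (h : DisplacesLE S f θ) (n : ℕ) : DisplacesLE (S ^ n) f (n * θ) := by
  induction n with
  | zero => intro g hg u; simp_all
  | succ n ih =>
    rw [pow_succ]
    rintro _ ⟨g, hg, s, hs, rfl⟩ u
    simp only [mul_smul, Nat.cast_add, Nat.cast_one]
    linarith [ih g hg (s • u), h s hs u]

variable (hact : ∀ (g : G) (u v : V), Γ.Adj (g • u) (g • v) ↔ Γ.Adj u v)

include hact

lemma DisplacesLE.distConjugate (hS : S⁻¹ = S) (hf : DominatesDist Γ f)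
    (h : DisplacesLE S f θ) : DisplacesLE S (distConjugate Γ f) θ := by
  intro g hg u
  refine distConjugate_le fun v => ?_
  have hv := h g⁻¹ (hS ▸ inv_mem_inv.2 hg) v
  have hu := hf.sub_le_distConjugate u (g⁻¹ • v)
  rw [← graph_dist_smul_smul hact g, smul_inv_smul] at hu
  linarith

/-- Each step `f ↦ (f + f*) / 2` halves the distance between `f` and its conjugate. -/
lemma DominatesDist.exists_isAlmostExtremal_displacesLE (hS : S⁻¹ = S) (k : ℕ)
    (hf : DominatesDist Γ f) (h : DisplacesLE S f θ)
    (hgap : ∀ u, f u ≤ distConjugate Γ f u + 2 ^ k) :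
    ∃ f' : V → ℝ, IsAlmostExtremal Γ f' ∧ DisplacesLE S f' θ := by
  induction k generalizing f with
  | zero => exact ⟨f, hf.isAlmostExtremal (by simpa using hgap), h⟩
  | succ k ih =>
    have hconj := h.distConjugate hact hS hf
    refine ih hf.half_add_distConjugate (fun g hg u => ?_) (fun u => ?_)
    · linarith [h g hg u, hconj g hg u]
    · have hanti := hf.half_add_distConjugate.distConjugate_anti (f := f)
        (fun u => by linarith [hf.distConjugate_le_self u]) u
      have := hgap u
      rw [pow_succ] at this
      linarith

lemma HasDriftLE.exists_dominatesDist (hΓ : Γ.Connected) (hS : S⁻¹ = S)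
    (h : HasDriftLE Γ S x θ) :
    ∃ (f : V → ℝ) (c : ℝ), DominatesDist Γ f ∧ DisplacesLE S f θ ∧ ∀ u, f u ≤ Γ.dist u x + c := by
  obtain ⟨c, hc⟩ := h
  let F (u : V) (w : {w : ℕ × G // w.2 ∈ S ^ w.1}) : ℝ := Γ.dist u (w.1.2 • x) + θ * w.1.1 + c / 2
  have : Nonempty {w : ℕ × G // w.2 ∈ S ^ w.1} := ⟨(0, 1), by simp⟩
  have hbdd (u : V) : BddBelow (range (F u)) := by
    refine ⟨-(c / 2), ?_⟩
    rintro _ ⟨⟨⟨n, g⟩, hg⟩, rfl⟩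
    have := hc n g hg
    have : (0 : ℝ) ≤ Γ.dist x (g • x) := Nat.cast_nonneg _
    have : (0 : ℝ) ≤ Γ.dist u (g • x) := Nat.cast_nonneg _
    simp only [F]
    linarith
  refine ⟨fun u => ⨅ w, F u w, c / 2, fun u v => ?_, fun s hs u => ?_, fun u => ?_⟩
  · refine le_ciInf_add_ciInf ?_
    rintro ⟨⟨m, g⟩, hg⟩ ⟨⟨n, k⟩, hk⟩
    have hgk := hc (m + n) (g⁻¹ * k) (by
      rw [pow_add]
      exact mul_mem_mul (by rw [← hS, inv_pow]; exact inv_mem_inv.2 hg) hk)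
    rw [← graph_dist_smul_smul hact g, mul_smul, smul_inv_smul, Nat.cast_add] at hgk
    have htri : (Γ.dist u v : ℝ) ≤
        Γ.dist u (g • x) + Γ.dist (g • x) (k • x) + Γ.dist v (k • x) := by
      rw [dist_comm (u := v)]
      exact_mod_cast hΓ.dist_triangle.trans (Nat.add_le_add_right hΓ.dist_triangle _)
    simp only [F]
    linarith
  · rw [← sub_le_iff_le_add]
    refine le_ciInf fun ⟨⟨n, g⟩, hg⟩ => ?_
    have hsg := ciInf_le (hbdd (s • u)) ⟨(n + 1, s * g), by
      rw [pow_succ']; exact mul_mem_mul hs hg⟩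
    simp only [F, mul_smul, graph_dist_smul_smul hact, Nat.cast_add, Nat.cast_one] at hsg ⊢
    linarith
  · simpa [F] using ciInf_le (hbdd u) ⟨(0, 1), by simp⟩

lemma HasDriftLE.exists_isAlmostExtremal (hΓ : Γ.Connected) (hS : S⁻¹ = S)
    (h : HasDriftLE Γ S x θ) :
    ∃ f : V → ℝ, IsAlmostExtremal Γ f ∧ DisplacesLE S f θ := by
  obtain ⟨f, c, hf, hdisp, hfc⟩ := h.exists_dominatesDist hact hΓ hS
  obtain ⟨k, hk⟩ := pow_unbounded_of_one_lt (2 * c) one_lt_two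
  refine hf.exists_isAlmostExtremal_displacesLE hact hS k hdisp fun u => ?_
  have hconj := hf.sub_le_distConjugate u x
  have hfx := hfc x
  rw [dist_self, Nat.cast_zero] at hfx
  linarith [hfc u]

lemma HasDriftLE.of_displacesLE_pow (hΓ : IsHellyGraph Γ) (x : V) {η : ℝ} {K : ℕ}
    (hK : 0 < K) (hf : DominatesDist Γ f) (hθ : DisplacesLE S f θ)
    (hη : DisplacesLE (S ^ K) f (K * η)) : HasDriftLE Γ S x η := by
  obtain ⟨z, hz⟩ := hf.exists_dist_le_add_one hΓ
  refine ⟨2 * Γ.dist x z + f z + 1 + K * |θ - η|, fun n g hg => ?_⟩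
  have hfgz : f (g • z) ≤ f z + n * η + K * |θ - η| := by
    have hn : n = K * (n / K) + n % K := (Nat.div_add_mod n K).symm
    have hn_cast : (n : ℝ) = K * (n / K : ℕ) + (n % K : ℕ) := by exact_mod_cast hn
    rw [hn, pow_add, pow_mul] at hg
    obtain ⟨a, ha, b, hb, rfl⟩ := hg
    have hfa := hη.pow (n / K) a ha (b • z)
    have hfb := hθ.pow (n % K) b hb z
    have hrem : (n % K : ℕ) * (θ - η) ≤ K * |θ - η| :=
      calc (n % K : ℕ) * (θ - η) ≤ (n % K : ℕ) * |θ - η| := by gcongr; exact le_abs_self _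
        _ ≤ K * |θ - η| := by gcongr; exact (Nat.mod_lt n hK).le
    simp only [mul_smul]
    rw [hn_cast]
    linarith
  have htri : Γ.dist x (g • x) ≤ Γ.dist x z + (Γ.dist (g • z) z + Γ.dist x z) := by
    have h₁ := hΓ.1.dist_triangle (u := x) (v := z) (w := g • x)
    have h₂ := hΓ.1.dist_triangle (u := z) (v := g • z) (w := g • x)
    rw [graph_dist_smul_smul hact, dist_comm (v := x), dist_comm (v := g • z)] at h₂
    omega
  have htri_cast : (Γ.dist x (g • x) : ℝ) ≤ Γ.dist x z + (Γ.dist (g • z) z + Γ.dist x z) := by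
    exact_mod_cast htri
  linarith [hz (g • z)]

lemma exists_hasDriftLE (hΓ : Γ.Connected) (hS : S.Finite) (x : V) :
    ∃ m : ℕ, HasDriftLE Γ S x m := by
  obtain ⟨m, hm⟩ := (hS.image fun s => Γ.dist x (s • x)).bddAbove
  have hdisp : DisplacesLE S (fun u => (Γ.dist x u : ℝ)) m := by
    intro s hs u
    have hsx : Γ.dist x (s • x) ≤ m := hm ⟨s, hs, rfl⟩
    have htri := hΓ.dist_triangle (u := x) (v := s • x) (w := s • u)
    rw [graph_dist_smul_smul hact] at htri
    have : Γ.dist x (s • u) ≤ Γ.dist x u + m := by omega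
    dsimp only
    exact_mod_cast this
  refine ⟨m, 0, fun n g hg => ?_⟩
  simpa [mul_comm] using hdisp.pow n g hg x

end Displacement

section TorsionGroup

open Set

variable {V : Type*} {Γ : SimpleGraph V} {G : Type*} [Group G] [MulAction G V]
  {S : Set G} {f : V → ℝ} {θ : ℝ} {β : ℕ}

lemma exists_path_of_mem_pow (h1 : 1 ∈ S) {n : ℕ} {g : G} (hg : g ∈ S ^ n) :
    ∃ h : ℕ → G, (∀ i, (h i)⁻¹ * h (i + 1) ∈ S) ∧ h 0 = 1 ∧ h n = g := by
  induction n generalizing g with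
  | zero => exact ⟨fun _ => 1, by simpa using h1, rfl, by simpa [eq_comm] using hg⟩
  | succ n ih =>
    rw [pow_succ] at hg
    obtain ⟨g, hg, s, hs, rfl⟩ := hg
    obtain ⟨h, hS, h_zero, h_last⟩ := ih hg
    refine ⟨fun i => if i ≤ n then h i else g * s, fun i => ?_, by simpa using h_zero, by simp⟩
    rcases lt_trichotomy i n with hi | rfl | hi
    · simpa [hi.le, Nat.succ_le_of_lt hi] using hS i
    · simpa [h_last] using hs
    · simpa [hi.not_ge, (hi.trans i.lt_succ_self).not_ge] using h1

lemma exists_lt_state_eq {B : Set V} (hB : B.encard ≤ β) {K : ℕ} (hK : β * (2 ^ β * 8) ≤ K)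
    (a : ℤ) (w : ℕ → V) (C : ℕ → Set V) (L : ℕ → ℤ) (hw : ∀ i, w i ∈ B) (hC : ∀ i, C i ⊆ B)
    (hL : ∀ i ≤ K, L i ∈ Icc a (a + 7)) :
    ∃ i j, i < j ∧ w i = w j ∧ C i = C j ∧ L i = L j := by
  have hB_fin : B.Finite := finite_of_encard_le_coe hB
  have hB_ncard : B.ncard ≤ β := by
    rw [← hB_fin.cast_ncard_eq] at hB
    exact_mod_cast hB
  have hcard : (B ×ˢ (𝒫 B ×ˢ Icc a (a + 7))).ncard < (Iic K).ncard := by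
    have hIcc : (Icc a (a + 7)).ncard = 8 := by
      rw [← Finset.coe_Icc, ncard_coe_finset, Int.card_Icc]
      omega
    have hIic : (Iic K).ncard = K + 1 := by
      rw [← Finset.coe_Iic, ncard_coe_finset, Nat.card_Iic]
    rw [ncard_prod, ncard_prod, ncard_powerset B hB_fin, hIcc, hIic, Nat.lt_succ_iff]
    refine le_trans ?_ hK
    gcongr
    norm_num
  obtain ⟨i, -, j, -, hne, hij⟩ := exists_ne_map_eq_of_ncard_lt_of_maps_to hcard
    (f := fun i => (w i, C i, L i)) (fun i hiK => ⟨hw i, hC i, hL i hiK⟩)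
    (hB_fin.prod (hB_fin.powerset.prod (finite_Icc _ _)))
  simp only [Prod.mk.injEq] at hij
  rcases hne.lt_or_gt with hlt | hlt
  · exact ⟨i, j, hlt, hij⟩
  · exact ⟨j, i, hlt, hij.1.symm, hij.2.1.symm, hij.2.2.symm⟩

lemma DisplacesLE.antitone_sub_mul (hS : S⁻¹ = S) (hdisp : DisplacesLE S f θ) {h : ℕ → G}
    (hh : ∀ i, (h i)⁻¹ * h (i + 1) ∈ S) (o : V) :
    Antitone fun i : ℕ => f ((h i)⁻¹ • o) - i * θ := by
  refine antitone_nat_of_succ_le fun i => ?_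
  have := hdisp _ (hS ▸ inv_mem_inv.2 (hh i)) ((h i)⁻¹ • o)
  rw [mul_inv_rev, inv_inv, mul_smul, smul_inv_smul] at this
  push_cast
  linarith

lemma IsAlmostExtremal.dist_sub_floor_mem_Icc (hΓ : Γ.Connected) (hS : S⁻¹ = S) (hθ : 0 ≤ θ)
    (hf : IsAlmostExtremal Γ f) (hdisp : DisplacesLE S f θ) {K : ℕ} {h : ℕ → G}
    (hh : ∀ i, (h i)⁻¹ * h (i + 1) ∈ S) (h_zero : h 0 = 1) {o w : V}
    (ho : f o + K * θ - 1 ≤ f ((h K)⁻¹ • o)) (hw : ∀ u, (Γ.dist u w : ℝ) ≤ f u + 2) {i : ℕ}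
    (hi : i ≤ K) :
    (Γ.dist ((h i)⁻¹ • o) w : ℤ) - ⌊i * θ⌋₊ ∈ Icc (⌈f o⌉ - 5) (⌈f o⌉ - 5 + 7) := by
  have hgrowth := hdisp.antitone_sub_mul hS hh o
  have hlow : f o + i * θ - 1 ≤ f ((h i)⁻¹ • o) := by
    have := hgrowth hi
    dsimp only at this
    linarith
  have hupp : f ((h i)⁻¹ • o) ≤ f o + i * θ := by
    have := hgrowth i.zero_le
    simp only [h_zero, inv_one, one_smul, Nat.cast_zero, zero_mul, sub_zero] at this
    linarith
  have hnear := hw ((h i)⁻¹ • o)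
  have hfar := hf.le_dist_add_four hΓ hw ((h i)⁻¹ • o)
  have hfloor_le : (⌊i * θ⌋₊ : ℝ) ≤ i * θ := Nat.floor_le (by positivity)
  have hfloor_gt : i * θ < ⌊i * θ⌋₊ + 1 := Nat.lt_floor_add_one _
  set L : ℤ := (Γ.dist ((h i)⁻¹ • o) w : ℤ) - ⌊i * θ⌋₊ with hL
  have hL_cast : (L : ℝ) = Γ.dist ((h i)⁻¹ • o) w - ⌊i * θ⌋₊ := by
    rw [hL, Int.cast_sub, Int.cast_natCast, Int.cast_natCast]
  have hceil_le : ⌈f o⌉ ≤ L + 5 := Int.ceil_le.2 (by push_cast; linarith)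
  have hlt_ceil : L - 3 < ⌈f o⌉ := Int.lt_ceil.2 (by push_cast; linarith)
  exact ⟨by omega, by omega⟩

variable (hΓ : IsHellyGraph Γ)
  (hact : ∀ (g : G) (u v : V), Γ.Adj (g • u) (g • v) ↔ Γ.Adj u v)

include hΓ hact

/-- Rounding the path `i ↦ f ((h i)⁻¹ • ·)` in the injective hull to a path `i ↦ h i • w i` of
vertices. -/
lemma DisplacesLE.exists_path_near (hθ : 0 ≤ θ) (hf : DominatesDist Γ f)
    (hdisp : DisplacesLE S f θ) {h : ℕ → G} (hh : ∀ i, (h i)⁻¹ * h (i + 1) ∈ S) :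
    ∃ w : ℕ → V, (∀ i u, (Γ.dist u (w i) : ℝ) ≤ f u + 2) ∧
      ∀ i j, i ≤ j → Γ.dist (h i • w i) (h j • w j) + ⌊i * θ⌋₊ ≤ ⌊j * θ⌋₊ := by
  obtain ⟨z, hz, hz_path⟩ := hΓ.exists_path_near (p := fun i u => f ((h i)⁻¹ • u)) hθ
    (fun i u v => by
      rw [← graph_dist_smul_smul hact (h i)⁻¹]
      exact hf _ _)
    (fun i u => by
      have := hdisp _ (hh i) ((h (i + 1))⁻¹ • u)
      rwa [mul_smul, smul_inv_smul] at this)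
  refine ⟨fun i => (h i)⁻¹ • z i, fun i u => ?_, by simpa using hz_path⟩
  have := hz i (h i • u)
  rwa [inv_smul_smul, ← graph_dist_smul_smul hact (h i)⁻¹, inv_smul_smul] at this

lemma IsHellyGraph.not_isOfFinOrder_of_state_eq {g k : G} {o w : V} {s t : ℕ} (hst : s < t)
    (hdist : Γ.dist (g • w) (k • w) + s ≤ t)
    (hlink : descendingLink Γ (g⁻¹ • o) w = descendingLink Γ (k⁻¹ • o) w)
    (hdefect : (Γ.dist (g⁻¹ • o) w : ℤ) - s = Γ.dist (k⁻¹ • o) w - t) :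
    ¬ IsOfFinOrder (k * g⁻¹) := by
  have hsmul : (k * g⁻¹) • g • w = k • w := by rw [mul_smul, inv_smul_smul]
  have hback (a : G) : Γ.dist (a⁻¹ • o) w = Γ.dist o (a • w) := by
    rw [← graph_dist_smul_smul hact a, smul_inv_smul]
  have htri := hΓ.1.dist_triangle (u := o) (v := g • w) (w := k • w)
  rw [hback, hback] at hdefect
  refine hΓ.not_isOfFinOrder_of_descendingLink_eq hact (o := o) (z := g • w) ?_ ?_ ?_ <;>
    rw [hsmul]
  · omega
  · omega
  · calc descendingLink Γ o (k • w) = k • descendingLink Γ (g⁻¹ • o) w := by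
          rw [hlink, smul_descendingLink hact, smul_inv_smul]
      _ = descendingLink Γ ((k * g⁻¹) • o) (k • w) := by
          rw [smul_descendingLink hact, mul_smul]

variable (hβ : ∀ z, {v | Γ.dist z v ≤ 7}.encard ≤ β)

include hβ

/-- A word along which `f` grows at almost the maximal rate visits the same state (nearby vertex,
descending link, defect) twice, and the subword between the two visits can be pumped. -/
lemma IsAlmostExtremal.exists_not_isOfFinOrder (hS : S⁻¹ = S) (hθ : 1 ≤ θ)
    (hf : IsAlmostExtremal Γ f) (hdisp : DisplacesLE S f θ) {K : ℕ} (hK : β * (2 ^ β * 8) ≤ K)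
    {h : ℕ → G} (hh : ∀ i, (h i)⁻¹ * h (i + 1) ∈ S) (h_zero : h 0 = 1) {o : V}
    (ho : f o + K * θ - 1 ≤ f ((h K)⁻¹ • o)) : ∃ g : G, ¬ IsOfFinOrder g := by
  have hθ_nonneg : 0 ≤ θ := zero_le_one.trans hθ
  obtain ⟨w, hw, hpath⟩ := hdisp.exists_path_near hΓ hact hθ_nonneg hf.dominatesDist hh
  have hww (i : ℕ) : Γ.dist (w 0) (w i) ≤ 6 := hf.dist_le_six hΓ.1 (hw 0) (hw i)
  obtain ⟨i, j, hij, hw_eq, hlink, hdefect⟩ := exists_lt_state_eq (hβ (w 0)) hK _ w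
    (fun i => descendingLink Γ ((h i)⁻¹ • o) (w i))
    (fun i => (Γ.dist ((h i)⁻¹ • o) (w i) : ℤ) - ⌊i * θ⌋₊)
    (fun i => (hww i).trans (by norm_num))
    (fun i v hv => by
      have hvw : Γ.dist v (w i) ≤ 1 := hv.1
      rw [dist_comm] at hvw
      exact hΓ.1.dist_triangle.trans (add_le_add (hww i) hvw))
    (fun i => hf.dist_sub_floor_mem_Icc hΓ.1 hS hθ_nonneg hdisp hh h_zero ho (hw i))
  have hfloor : ⌊i * θ⌋₊ < ⌊j * θ⌋₊ := by
    refine Nat.lt_of_succ_le (Nat.le_floor ?_)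
    have : (i + 1 : ℝ) * θ ≤ j * θ := by gcongr; exact_mod_cast hij
    push_cast
    linarith [Nat.floor_le (show 0 ≤ i * θ by positivity)]
  have hdist := hpath i j hij.le
  simp only [hw_eq] at hdist hlink hdefect
  exact ⟨_, hΓ.not_isOfFinOrder_of_state_eq hact hfloor hdist hlink hdefect⟩

variable (htor : ∀ g : G, IsOfFinOrder g)

include htor

lemma HasDriftLE.sub_one_div (h1 : 1 ∈ S) (hS : S⁻¹ = S) (hθ : 1 ≤ θ) {K : ℕ} (hK_pos : 0 < K)
    (hK : β * (2 ^ β * 8) ≤ K) {x : V} (h : HasDriftLE Γ S x θ) : HasDriftLE Γ S x (θ - 1 / K) := by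
  obtain ⟨f, hf, hdisp⟩ := h.exists_isAlmostExtremal hact hΓ.1 hS
  refine .of_displacesLE_pow hact hΓ x hK_pos hf.dominatesDist hdisp fun g hg o => ?_
  by_contra! hgo
  have hg_inv : g⁻¹ ∈ S ^ K := by rw [← hS, inv_pow]; exact inv_mem_inv.2 hg
  obtain ⟨w, hw, hw_zero, hw_last⟩ := exists_path_of_mem_pow h1 hg_inv
  obtain ⟨k, hk⟩ := hf.exists_not_isOfFinOrder (o := o) hΓ hact hβ hS hθ hdisp hK hw hw_zero (by
    rw [hw_last, inv_inv]
    have : (K : ℝ) * (θ - 1 / K) = K * θ - 1 := by field_simp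
    linarith)
  exact hk (htor k)

lemma hasDriftLE_one (h1 : 1 ∈ S) (hS : S⁻¹ = S) (hS_fin : S.Finite) (x : V) :
    HasDriftLE Γ S x 1 := by
  let K := β * (2 ^ β * 8) + 1
  have hdescent (n : ℕ) (h : HasDriftLE Γ S x (1 + n / K)) : HasDriftLE Γ S x 1 := by
    induction n with
    | zero => simpa using h
    | succ n ih =>
      have hstep := h.sub_one_div (K := K) hΓ hact hβ htor h1 hS
        (le_add_of_nonneg_right (by positivity)) (Nat.succ_pos _) (Nat.le_succ _)
      refine ih (hstep.mono (le_of_eq ?_))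
      push_cast
      ring
  obtain ⟨m, hm⟩ := exists_hasDriftLE hact hΓ.1 hS_fin x
  refine hdescent (m * K) (hm.mono ?_)
  have hK : (K : ℝ) ≠ 0 := by positivity
  rw [Nat.cast_mul, mul_div_cancel_right₀ _ hK]
  linarith

lemma exists_forall_dist_smul_le_six {T : Set G} (hT : T.Finite) :
    ∃ z, ∀ g ∈ T, Γ.dist z (g • z) ≤ 6 := by
  let S : Set G := insert 1 (T ∪ T⁻¹)
  have hS : S⁻¹ = S := by simp only [S, inv_insert, inv_one, union_inv, inv_inv, union_comm]
  have hS_fin : S.Finite := (hT.union hT.inv).insert 1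
  obtain ⟨x⟩ := hΓ.1.nonempty
  have hdrift : HasDriftLE Γ S x 1 := hasDriftLE_one hΓ hact hβ htor (mem_insert _ _) hS hS_fin x
  obtain ⟨f, hf, hdisp⟩ := hdrift.exists_isAlmostExtremal hact hΓ.1 hS
  obtain ⟨z, hz⟩ := hf.dominatesDist.exists_dist_le_add_one hΓ
  have hfz := hf.le_dist_add_four hΓ.1 (fun u => (hz u).trans (by linarith)) z
  rw [dist_self, Nat.cast_zero] at hfz
  refine ⟨z, fun g hg => ?_⟩
  have hfgz := hdisp g (mem_insert_of_mem _ (mem_union_left _ hg)) z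
  have : (Γ.dist z (g • z) : ℝ) ≤ 6 := by
    rw [dist_comm]
    linarith [hz (g • z)]
  exact_mod_cast this

end TorsionGroup

lemma exists_forall_le_natCast_of_cocompact {V G : Type*} [SMul G V]
    (hcocompact : ∃ s : Finset V, ∀ v : V, ∃ g : G, ∃ u ∈ s, g • u = v) {A : V → ℕ∞}
    (hA : ∀ (g : G) v, A (g • v) ≤ A v) (hA_top : ∀ v, A v ≠ ⊤) : ∃ N : ℕ, ∀ v, A v ≤ N := by
  obtain ⟨s, hs⟩ := hcocompact
  refine ⟨s.sup fun u => (A u).toNat, fun v => ?_⟩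
  obtain ⟨g, u, hu, rfl⟩ := hs v
  calc A (g • u) ≤ A u := hA g u
    _ = (A u).toNat := (ENat.natCast_toNat (hA_top u)).symm
    _ ≤ _ := by exact_mod_cast Finset.le_sup (f := fun u => (A u).toNat) hu

section GeometricAction

open Set

variable {V : Type*} {Γ : SimpleGraph V} {G : Type*} [Group G] [MulAction G V]
  (hact : ∀ (g : G) (u v : V), Γ.Adj (g • u) (g • v) ↔ Γ.Adj u v)
  (hproper : ∀ (x : V) (r : ℕ), {g : G | Γ.dist x (g • x) ≤ r}.Finite)
  (hcocompact : ∃ s : Finset V, ∀ v : V, ∃ g : G, ∃ u ∈ s, g • u = v)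

include hact hproper hcocompact

lemma finite_dist_le_of_proper_of_cocompact (hΓ : Γ.Connected) (z : V) (r : ℕ) :
    {v | Γ.dist z v ≤ r}.Finite := by
  obtain ⟨s, hs⟩ := hcocompact
  refine (s.finite_toSet.biUnion fun u _ =>
    (hproper z (r + Γ.dist u z)).image (· • u)).subset fun v hv => ?_
  obtain ⟨g, u, hu, rfl⟩ := hs v
  refine mem_biUnion hu ⟨g, ?_, rfl⟩
  calc Γ.dist z (g • z) ≤ Γ.dist z (g • u) + Γ.dist (g • u) (g • z) := hΓ.dist_triangle
    _ ≤ r + Γ.dist u z := by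
      rw [graph_dist_smul_smul hact]
      exact Nat.add_le_add_right hv _

lemma exists_forall_encard_dist_le (hΓ : Γ.Connected) (r : ℕ) :
    ∃ β : ℕ, ∀ z, {v | Γ.dist z v ≤ r}.encard ≤ β := by
  refine exists_forall_le_natCast_of_cocompact hcocompact (fun g z => ?_) fun z =>
    encard_ne_top_iff.2 (finite_dist_le_of_proper_of_cocompact hact hproper hcocompact hΓ z r)
  refine (encard_le_encard fun v hv => ?_).trans (encard_image_le (g • ·) _)
  refine ⟨g⁻¹ • v, ?_, smul_inv_smul g v⟩
  rwa [mem_ofPred_eq, ← graph_dist_smul_smul hact g, smul_inv_smul]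

lemma exists_forall_encard_dist_smul_le (r : ℕ) :
    ∃ N : ℕ, ∀ z, {g : G | Γ.dist z (g • z) ≤ r}.encard ≤ N := by
  refine exists_forall_le_natCast_of_cocompact hcocompact (fun g z => ?_) fun z =>
    encard_ne_top_iff.2 (hproper z r)
  refine (encard_le_encard fun k hk => ?_).trans (encard_image_le (g * · * g⁻¹) _)
  refine ⟨g⁻¹ * k * g, ?_, by group⟩
  rwa [mem_ofPred_eq, ← graph_dist_smul_smul hact g, smul_smul, ← mul_assoc, ← mul_assoc,
    mul_inv_cancel, one_mul, mul_smul]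

end GeometricAction

theorem helly_torsion_subgroup_finite_general {V : Type*} {Γ : SimpleGraph V}
    (hΓ : IsHellyGraph Γ) {G : Type*} [Group G] [MulAction G V]
    (hact : ∀ (g : G) (u v : V), Γ.Adj (g • u) (g • v) ↔ Γ.Adj u v)
    {β N : ℕ} (hβ : ∀ z, {v | Γ.dist z v ≤ 7}.encard ≤ β)
    (hN : ∀ z, {g : G | Γ.dist z (g • z) ≤ 6}.encard ≤ N)
    (H : Subgroup G) (htor : ∀ h ∈ H, IsOfFinOrder h) : (H : Set G).encard ≤ N := by
  by_contra! hlt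
  obtain ⟨T, hTH, hT⟩ := Set.exists_subset_encard_eq (Order.add_one_le_of_lt hlt)
  have hT_fin : T.Finite := Set.finite_of_encard_eq_coe (k := N + 1) (by exact_mod_cast hT)
  obtain ⟨z, hz⟩ := exists_forall_dist_smul_le_six (G := H) (T := Subtype.val ⁻¹' T) hΓ
    (fun h => hact h) hβ (fun h => Submonoid.isOfFinOrder_coe.1 (htor h h.2))
    (hT_fin.preimage Subtype.val_injective.injOn)
  have hT_le := (Set.encard_le_encard fun g hg => hz ⟨g, hTH hg⟩ hg).trans (hN z)
  rw [hT] at hT_le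
  have : N + 1 ≤ N := by exact_mod_cast hT_le
  omega

/-- Torsion subgroups of groups acting geometrically (metrically properly and
cocompactly) on locally finite Helly graphs are finite. -/
theorem helly_torsion_subgroup_finite {V : Type*} (Γ : SimpleGraph V)
    (hΓ : IsHellyGraph Γ) (hlf : ∀ v : V, (Γ.neighborSet v).Finite)
    (G : Type*) [Group G] [MulAction G V]
    (hact : ∀ (g : G) (u v : V), Γ.Adj (g • u) (g • v) ↔ Γ.Adj u v)
    (hproper : ∀ (x : V) (r : ℕ), {g : G | Γ.dist x (g • x) ≤ r}.Finite)
    (hcocompact : ∃ s : Finset V, ∀ v : V, ∃ g : G, ∃ u ∈ s, g • u = v)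
    (H : Subgroup G) (htor : ∀ h ∈ H, IsOfFinOrder h) :
    (H : Set G).Finite := by
  obtain ⟨β, hβ⟩ := exists_forall_encard_dist_le hact hproper hcocompact hΓ.1 7
  obtain ⟨N, hN⟩ := exists_forall_encard_dist_smul_le hact hproper hcocompact 6
  exact Set.finite_of_encard_le_coe
    (helly_torsion_subgroup_finite_general hΓ hact hβ hN H htor)
end

section
/- Let X be a uniformly locally finite connected graph (there is D ∈ ℕ with every vertex of degree at most D) whose path metric is Gromov hyperbolic, i.e., there is δ ≥ 0 such that d(x,y) + d(z,w) ≤ max(d(x,z) + d(y,w), d(x,w) + d(y,z)) + 2δ for all vertices x, y, z, w. Let G be a finitely generated group acting on X by graph automorphisms such that every element of G has bounded orbits (the action is locally elliptic). Then G has a bounded orbit on the vertices of X (the action is elliptic). In particular, every action of a finitely generated torsion group on X by automorphisms has a bounded orbit. -/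
open SimpleGraph Pointwise

/-!
Let `K > 3δ`. An element `g` with bounded orbits satisfies `d(x, g²x) ≤ d(x, gx) + 2δ`, since
otherwise the four-point condition makes `d(x, gⁿx)` grow linearly. Consequently, if `g` and `h`
both move `x` by at least `2K + 5δ`, then the Gromov product of `gx` and `hx` at `x` is at least
`K`: otherwise the path `x, gx, ghx, ghgx, ghghx` hardly backtracks, and `gh` violates the
inequality. So all elements moving `x` far move it in the same direction, and a step of length `K`
in that direction reduces each of their displacements by `2K - 6δ`. Iterating, every finite subset
of `G` moves some point by at most `4K + 5δ`, a bound independent of the subset.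

Let `N` bound the size of balls of this radius. If `T` is a finite generating set containing `1`,
then for each `n` there is a point `x` such that `Tⁿx` has at most `N` elements. For `n > N` this
forces `Tᵏx = Tᵏ⁺¹x` for some `k`, and then the orbit of `x` is the finite set `Tᵏx`.
-/

theorem not_bddAbove_range_of_add_le_max {R : Type*} [AddCommGroup R] [LinearOrder R]
    [IsOrderedAddMonoid R] [Archimedean R] {a : ℕ → R} {ε : R} (hε : 0 < ε) (h₀ : a 0 ≤ a 1)
    (h : ∀ n, a (n + 1) + ε ≤ max (a n) (a (n + 2))) : ¬BddAbove (Set.range a) := by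
  have add_le_of_le {n : ℕ} (hn : a n ≤ a (n + 1)) : a (n + 1) + ε ≤ a (n + 2) :=
    (le_max_iff.1 (h n)).resolve_left (hn.trans_lt (lt_add_of_pos_right _ hε)).not_ge
  have le_succ (n : ℕ) : a n ≤ a (n + 1) := by
    induction n with
    | zero => exact h₀
    | succ n ih => exact (le_add_of_nonneg_right hε.le).trans (add_le_of_le ih)
  have linear_growth (n : ℕ) : a 1 + n • ε ≤ a (n + 1) := by
    induction n with
    | zero => simp
    | succ n ih =>
      rw [succ_nsmul, ← add_assoc]
      exact (add_le_add_left ih ε).trans (add_le_of_le (le_succ n))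
  rintro ⟨C, hC⟩
  obtain ⟨n, hn⟩ := exists_lt_nsmul hε (C - a 1)
  exact (sub_lt_iff_lt_add'.1 hn).not_ge ((linear_growth n).trans (hC ⟨n + 1, rfl⟩))

section FiniteOrbit

variable {M α : Type*} [Monoid M] [MulAction M α]

theorem orbit_subset_of_smul_subset {S : Set M} (hS : Submonoid.closure S = ⊤) {A : Set α}
    (hA : S • A ⊆ A) {x : α} (hx : x ∈ A) : MulAction.orbit M x ⊆ A := by
  rintro _ ⟨g, rfl⟩
  have hg : g ∈ Submonoid.closure S := hS ▸ Submonoid.mem_top g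
  induction hg using Submonoid.closure_induction_left with
  | one => simpa using hx
  | mul_left s hs g _ ih => simpa [mul_smul] using hA (Set.smul_mem_smul hs ih)

theorem exists_finite_orbit_of_card_smul_le [Monoid.FG M] [DecidableEq α] {N : ℕ}
    (hN : ∀ F : Finset M, ∃ x : α, (F • ({x} : Finset α)).card ≤ N) :
    ∃ x : α, (MulAction.orbit M x).Finite := by
  classical
  obtain ⟨S, hS⟩ := Monoid.fg_def.1 ‹Monoid.FG M›
  set T : Finset M := insert 1 S
  have one_mem : 1 ∈ T := Finset.mem_insert_self 1 S
  obtain ⟨x, hx⟩ := hN (T ^ (N + 1))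
  let O (k : ℕ) : Finset α := T ^ k • {x}
  have O_succ (k : ℕ) : O (k + 1) = T • O k := by simp only [O, pow_succ', mul_smul]
  have O_mono : Monotone O := fun _ _ hkl ↦
    Finset.smul_subset_smul_right (Finset.pow_subset_pow_right one_mem hkl)
  obtain ⟨k, hk⟩ : ∃ k, O k = O (k + 1) := by
    by_contra! hne
    have card_strictMono : StrictMono fun k ↦ (O k).card :=
      strictMono_nat_of_lt_succ fun k ↦
        Finset.card_lt_card ((O_mono k.le_succ).lt_of_ne (hne k))
    exact (N.lt_succ_self.trans_le card_strictMono.le_apply).not_ge hx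
  have smul_O_subset : (S : Set M) • (O k : Set α) ⊆ O k := by
    rw [← Finset.coe_smul, Finset.coe_subset]
    calc S • O k ⊆ T • O k := Finset.smul_subset_smul_right (Finset.subset_insert 1 S)
      _ = O k := by rw [← O_succ, ← hk]
  have mem_O : x ∈ O k := by
    simpa using Finset.smul_mem_smul (Finset.one_mem_pow one_mem) (Finset.mem_singleton_self x)
  exact ⟨x, (O k).finite_toSet.subset (orbit_subset_of_smul_subset hS smul_O_subset mem_O)⟩

end FiniteOrbit

/-- Gromov's four-point condition for `δ`-hyperbolicity of `X`, with the additive constant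
normalized to `2 * δ`. -/
def IsGromovHyperbolic (X : Type*) [PseudoMetricSpace X] (δ : ℝ) : Prop :=
  ∀ x y z w : X, dist x y + dist z w ≤ max (dist x z + dist y w) (dist x w + dist y z) + 2 * δ

/-- Local ellipticity of the action of `M` on `X`: each element has bounded orbits. Only the
nonnegative powers of `g` are considered, so that the notion makes sense for monoids; for isometric
actions of groups this bounds the orbits of the cyclic group generated by `g` as well. -/
def IsLocallyElliptic (M X : Type*) [Monoid M] [PseudoMetricSpace X] [MulAction M X] : Prop :=
  ∀ (g : M) (x : X), Bornology.IsBounded (Set.range fun n : ℕ ↦ g ^ n • x)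

theorem isLocallyElliptic_iff {M X : Type*} [Monoid M] [PseudoMetricSpace X] [MulAction M X] :
    IsLocallyElliptic M X ↔ ∀ (g : M) (x : X), ∃ C, ∀ n : ℕ, dist x (g ^ n • x) ≤ C := by
  refine forall₂_congr fun g x ↦ (Metric.isBounded_iff_subset_closedBall x).trans ?_
  simp only [Set.range_subset_iff, Metric.mem_closedBall']

namespace IsGromovHyperbolic

variable {X : Type*} [PseudoMetricSpace X] {δ K : ℝ}

theorem nonneg (hX : IsGromovHyperbolic X δ) (x : X) : 0 ≤ δ := by
  simpa using hX x x x x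

theorem add_le_or_add_le (hX : IsGromovHyperbolic X δ) (x y z w : X) :
    dist x y + dist z w ≤ dist x z + dist y w + 2 * δ ∨
      dist x y + dist z w ≤ dist x w + dist y z + 2 * δ := by
  rw [← le_max_iff, max_add_add_right]
  exact hX x y z w

theorem dist_le_of_dist_le (hX : IsGromovHyperbolic X δ) {x y z w : X} (hxy : dist x y = K)
    (hyz : dist y z = dist x z - K) (hzw : dist z w ≤ dist x z + dist x w - 2 * K) :
    dist y w ≤ dist x w - K + 2 * δ := by
  rcases hX.add_le_or_add_le y w x z with h | h <;>
    simp only [dist_comm y x, dist_comm w] at h <;> linarith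

section Monoid

variable {M : Type*} [Monoid M] [MulAction M X] [IsIsometricSMul M X]

theorem dist_sq_smul_le (hX : IsGromovHyperbolic X δ) {g : M} {x : X}
    (hg : Bornology.IsBounded (Set.range fun n : ℕ ↦ g ^ n • x)) :
    dist x (g ^ 2 • x) ≤ dist x (g • x) + 2 * δ := by
  by_contra! hlt
  refine not_bddAbove_range_of_add_le_max (a := fun n ↦ dist x (g ^ n • x))
    (sub_pos.2 hlt) (by simp) (fun n ↦ ?_) ?_
  · have shift (k l : ℕ) : dist (g ^ k • x) (g ^ (k + l) • x) = dist x (g ^ l • x) := by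
      rw [pow_add, mul_smul, dist_smul]
    have h₁ : dist (g • x) (g ^ (n + 2) • x) = dist x (g ^ (n + 1) • x) := by
      rw [← shift 1 (n + 1), pow_one, add_comm 1]
    have h₂ : dist (g ^ 2 • x) (g ^ (n + 2) • x) = dist x (g ^ n • x) := by
      rw [← shift 2 n, add_comm 2]
    have h₃ : dist (g ^ 2 • x) (g • x) = dist x (g • x) := by
      simpa [_root_.dist_comm (g • x)] using shift 1 1
    rw [le_max_iff]
    refine (hX.add_le_or_add_le x (g ^ 2 • x) (g • x) (g ^ (n + 2) • x)).imp ?_ ?_ <;>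
      intro h <;> rw [h₁] at h <;> linarith
  · obtain ⟨C, hC⟩ := Metric.isBounded_range_iff.1 hg
    exact ⟨C, Set.forall_mem_range.2 fun n ↦ by simpa using hC 0 n⟩

theorem lt_dist_mul_smul (hX : IsGromovHyperbolic X δ) {g h : M} {x : X}
    (hsq : dist x (g ^ 2 • x) ≤ dist x (g • x) + 2 * δ) (hg : 2 * K + 4 * δ ≤ dist x (g • x))
    (hgh : dist x (g • x) + dist x (h • x) - 2 * K < dist (g • x) (h • x)) :
    dist x (g • x) + dist x (h • x) - 2 * K - 2 * δ < dist x ((g * h) • x) := by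
  have four := hX.add_le_or_add_le (g • g • x) (g • h • x) (g • x) x
  simp only [dist_smul, dist_comm _ x] at four
  rw [mul_smul]
  rw [pow_two, mul_smul] at hsq
  rcases four with four | four <;> linarith

/-- A local-to-global principle along the path `x, gx, ghx, ghgx, ghghx`. -/
theorem lt_dist_mul_sq_smul (hX : IsGromovHyperbolic X δ) {g h : M} {x : X}
    (hg : 2 * K + 5 * δ ≤ dist x (g • x)) (hh : 2 * K + 5 * δ ≤ dist x (h • x))
    (hgh : dist x (g • x) + dist x (h • x) - 2 * K - 2 * δ < dist x ((g * h) • x))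
    (hhg : dist x (g • x) + dist x (h • x) - 2 * K - 2 * δ < dist x ((h * g) • x)) :
    dist x ((g * h) • x) + 2 * δ < dist x ((g * h) ^ 2 • x) := by
  simp only [pow_two, mul_smul] at hgh hhg ⊢
  have four_ghg := hX.add_le_or_add_le x (g • h • x) (g • x) (g • h • g • x)
  have four_ghgh := hX.add_le_or_add_le x (g • h • g • x) (g • h • x) (g • h • g • h • x)
  simp only [dist_smul, dist_comm _ x] at four_ghg four_ghgh
  have hδ := hX.nonneg x
  have lt_ghg : 2 * dist x (g • x) + dist x (h • x) - 4 * K - 6 * δ < dist x (g • h • g • x) := by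
    rcases four_ghg with four | four <;> linarith
  rcases four_ghgh with four | four <;> linarith

theorem dist_smul_smul_le (hX : IsGromovHyperbolic X δ) (hM : IsLocallyElliptic M X) {g h : M}
    {x : X} (hg : 2 * K + 5 * δ ≤ dist x (g • x)) (hh : 2 * K + 5 * δ ≤ dist x (h • x)) :
    dist (g • x) (h • x) ≤ dist x (g • x) + dist x (h • x) - 2 * K := by
  have hδ := hX.nonneg x
  have hsq (f : M) := hX.dist_sq_smul_le (hM f x)
  by_contra! hlt
  have hgh := hX.lt_dist_mul_smul (hsq g) (by linarith) hlt
  have hhg := hX.lt_dist_mul_smul (K := K) (h := g) (hsq h) (by linarith)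
    (by linarith [_root_.dist_comm (g • x) (h • x)])
  exact (hX.lt_dist_mul_sq_smul hg hh hgh (by rwa [add_comm] at hhg)).not_ge (hsq (g * h))

end Monoid

section Group

variable {G : Type*} [Group G] [MulAction G X] [IsIsometricSMul G X]

theorem dist_smul_le_of_dist_eq (hX : IsGromovHyperbolic X δ) (hG : IsLocallyElliptic G X)
    {f h : G} {x y : X} (hf : 2 * K + 5 * δ ≤ dist x (f • x)) (hxy : dist x y = K)
    (hyf : dist y (f • x) = dist x (f • x) - K) (hh : 2 * K + 5 * δ ≤ dist x (h • x)) :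
    dist y (h • y) ≤ dist x (h • x) - 2 * K + 6 * δ := by
  have dist_inv_smul (z : X) : dist z (h⁻¹ • x) = dist x (h • z) := by
    rw [← dist_smul h, smul_inv_smul, _root_.dist_comm]
  have toward {k : G} (hk : 2 * K + 5 * δ ≤ dist x (k • x)) :
      dist y (k • x) ≤ dist x (k • x) - K + 2 * δ :=
    hX.dist_le_of_dist_le hxy hyf (hX.dist_smul_smul_le hG hf hk)
  have hy := toward hh
  have hy_inv := toward (k := h⁻¹) (by rwa [dist_inv_smul])
  rw [dist_inv_smul, dist_inv_smul] at hy_inv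
  have hδ := hX.nonneg x
  rcases hX.add_le_or_add_le y (h • y) x (h • x) with four | four <;>
    simp only [dist_smul, dist_comm _ x] at four <;> linarith

theorem dist_smul_le_max (hX : IsGromovHyperbolic X δ) (hG : IsLocallyElliptic G X) {f : G}
    {x y : X} (hf : 2 * K + 5 * δ ≤ dist x (f • x)) (hxy : dist x y = K)
    (hyf : dist y (f • x) = dist x (f • x) - K) (g : G) :
    dist y (g • y) ≤ max (dist x (g • x) - (2 * K - 6 * δ)) (4 * K + 5 * δ) := by
  rw [le_max_iff]
  rcases le_total (2 * K + 5 * δ) (dist x (g • x)) with hg | hg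
  · left
    linarith [hX.dist_smul_le_of_dist_eq hG hf hxy hyf hg]
  · right
    calc dist y (g • y) ≤ dist y x + dist x (g • x) + dist (g • x) (g • y) := dist_triangle4 ..
      _ = 2 * K + dist x (g • x) := by rw [dist_smul, _root_.dist_comm y x, hxy]; ring
      _ ≤ 4 * K + 5 * δ := by linarith

theorem exists_forall_dist_smul_le (hX : IsGromovHyperbolic X δ) (hG : IsLocallyElliptic G X)
    (hδK : 3 * δ < K)
    (hK : ∀ x z : X, K ≤ dist x z → ∃ y, dist x y = K ∧ dist y z = dist x z - K)
    {F : Set G} {x : X} {B : ℝ} (hB : ∀ g ∈ F, dist x (g • x) ≤ B) :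
    ∃ y : X, ∀ g ∈ F, dist y (g • y) ≤ 4 * K + 5 * δ := by
  have hδ := hX.nonneg x
  obtain ⟨n, hn⟩ := Archimedean.arch (B - (4 * K + 5 * δ)) (y := 2 * K - 6 * δ) (by linarith)
  rw [nsmul_eq_mul] at hn
  replace hB (g) (hg : g ∈ F) : dist x (g • x) ≤ 4 * K + 5 * δ + n * (2 * K - 6 * δ) := by
    linarith [hB g hg]
  clear hn
  induction n generalizing x with
  | zero => exact ⟨x, by simpa using hB⟩
  | succ n ih =>
    by_cases hF : ∀ g ∈ F, dist x (g • x) ≤ 4 * K + 5 * δ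
    · exact ⟨x, hF⟩
    push Not at hF
    obtain ⟨f, -, hf⟩ := hF
    obtain ⟨y, hxy, hyf⟩ := hK x (f • x) (by linarith)
    refine ih fun g hg ↦ (hX.dist_smul_le_max hG (by linarith) hxy hyf g).trans (max_le ?_ ?_)
    · have := hB g hg
      push_cast at this
      linarith
    · exact le_add_of_nonneg_right (mul_nonneg n.cast_nonneg (by linarith))

theorem exists_finite_orbit [Nonempty X] [Group.FG G] (hX : IsGromovHyperbolic X δ)
    (hG : IsLocallyElliptic G X) (hδK : 3 * δ < K)
    (hK : ∀ x z : X, K ≤ dist x z → ∃ y, dist x y = K ∧ dist y z = dist x z - K) {N : ℕ}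
    (hN : ∀ x : X, (Metric.closedBall x (4 * K + 5 * δ)).encard ≤ N) :
    ∃ x : X, (MulAction.orbit G x).Finite := by
  classical
  refine exists_finite_orbit_of_card_smul_le (N := N) fun F ↦ ?_
  obtain ⟨x₀⟩ := ‹Nonempty X›
  obtain ⟨B, hB⟩ := (F.image fun g ↦ dist x₀ (g • x₀)).exists_le
  obtain ⟨x, hx⟩ := hX.exists_forall_dist_smul_le hG hδK hK (F := F) (x := x₀) (B := B)
    fun g hg ↦ hB _ (Finset.mem_image_of_mem _ hg)
  have smul_subset : ((F • {x} : Finset X) : Set X) ⊆ Metric.closedBall x (4 * K + 5 * δ) := by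
    simpa [Set.subset_def, dist_comm _ x] using hx
  refine ⟨x, ?_⟩
  rw [← Nat.cast_le (α := ℕ∞), ← Set.encard_coe_eq_coe_finsetCard]
  exact (Set.encard_le_encard smul_subset).trans (hN x)

end Group

end IsGromovHyperbolic

section Graph

variable {V W : Type*} {Γ : SimpleGraph V} {Γ' : SimpleGraph W}

theorem edist_map_le (f : Γ →g Γ') (u v : V) : Γ'.edist (f u) (f v) ≤ Γ.edist u v :=
  le_iInf fun p ↦ (edist_le (p.map f)).trans_eq (by rw [Walk.length_map])

theorem edist_map_iso (e : Γ ≃g Γ') (u v : V) : Γ'.edist (e u) (e v) = Γ.edist u v :=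
  (edist_map_le e.toHom u v).antisymm (by simpa using edist_map_le e.symm.toHom (e u) (e v))

theorem exists_dist_eq_of_add_eq_dist {u v : V} (huv : Γ.Reachable u v) {k l : ℕ}
    (hkl : k + l = Γ.dist u v) : ∃ w, Γ.dist u w = k ∧ Γ.dist w v = l := by
  obtain ⟨p, hp⟩ := huv.exists_walk_length_eq_dist
  have dist_take := Γ.dist_le (p.take k)
  have dist_drop := Γ.dist_le (p.drop k)
  have triangle := (p.take k).reachable.dist_triangle_left v
  rw [Walk.take_length] at dist_take
  rw [Walk.drop_length] at dist_drop
  exact ⟨p.getVert k, by omega, by omega⟩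

theorem encard_ball_le {D : ℕ} (hD : ∀ v, (Γ.neighborSet v).encard ≤ D) (c : V) (r : ℕ) :
    (Γ.ball c (r + 1)).encard ≤ (D + 1) ^ r := by
  induction r generalizing c with
  | zero => simp
  | succ r ih =>
    have finite_nbhd : (insert c (Γ.neighborSet c)).Finite :=
      (Set.finite_of_encard_le_coe (hD c)).insert c
    have ball_subset : Γ.ball c ((r + 1 : ℕ) + 1) ⊆
        ⋃ v ∈ finite_nbhd.toFinset, Γ.ball v (r + 1) := by
      intro w hw
      obtain ⟨p, hp⟩ := exists_walk_of_edist_ne_top (ne_top_of_lt (mem_ball_comm.1 hw))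
      rw [mem_ball_comm, mem_ball, ← hp] at hw
      rw [Set.mem_iUnion₂]
      cases p with
      | nil => exact ⟨c, by simp, mem_ball_self (by simp)⟩
      | @cons _ v _ hcv q =>
        refine ⟨v, by simp [hcv], ?_⟩
        rw [mem_ball_comm, mem_ball]
        refine (edist_le q).trans_lt ?_
        norm_cast at hw ⊢
        exact Nat.lt_of_succ_lt_succ hw
    calc (Γ.ball c ((r + 1 : ℕ) + 1)).encard
        ≤ ∑ v ∈ finite_nbhd.toFinset, (Γ.ball v (r + 1)).encard :=
          (Set.encard_le_encard ball_subset).trans (Finset.set_encard_biUnion_le _ _)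
      _ ≤ finite_nbhd.toFinset.card * (D + 1) ^ r := by
          simpa using Finset.sum_le_card_nsmul _ _ _ fun v _ ↦ ih v
      _ ≤ (D + 1) * (D + 1) ^ r := by
          rw [← finite_nbhd.encard_eq_coe_toFinset_card]
          gcongr
          exact (Set.encard_insert_le _ _).trans (by gcongr; exact hD c)
      _ = (D + 1) ^ (r + 1) := (pow_succ' _ _).symm

/-- The path metric on the vertices of a connected graph. Not an instance, since a vertex type may
carry several graphs. -/
noncomputable abbrev pathMetricSpace (hΓ : Γ.Connected) : MetricSpace V where
  dist u v := Γ.dist u v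
  dist_self u := by simp
  dist_comm u v := by rw [Γ.dist_comm]
  dist_triangle u v w := mod_cast hΓ.dist_triangle
  eq_of_dist_eq_zero h := hΓ.dist_eq_zero_iff.1 (mod_cast h)

theorem closedBall_subset_ball (hΓ : Γ.Connected) (c : V) (r : ℝ) :
    letI := pathMetricSpace hΓ
    Metric.closedBall c r ⊆ Γ.ball c (⌊r⌋₊ + 1) := by
  intro v hv
  have dist_le_floor : Γ.dist v c ≤ ⌊r⌋₊ := Nat.le_floor hv
  rw [mem_ball, ← (hΓ v c).coe_dist_eq_edist]
  exact_mod_cast Nat.lt_succ_of_le dist_le_floor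

theorem isIsometricSMul_pathMetricSpace (hΓ : Γ.Connected) {G : Type*} [Group G] [MulAction G V]
    (hG : ∀ (g : G) (u v : V), Γ.Adj (g • u) (g • v) ↔ Γ.Adj u v) :
    letI := pathMetricSpace hΓ
    IsIsometricSMul G V := by
  let := pathMetricSpace hΓ
  refine ⟨fun g ↦ Isometry.of_dist_eq fun u v ↦ ?_⟩
  let e : Γ ≃g Γ := ⟨MulAction.toPerm g, hG g _ _⟩
  exact congrArg (fun n : ℕ∞ ↦ (n.toNat : ℝ)) (edist_map_iso e u v)

theorem exists_dist_eq_of_le_dist (hΓ : Γ.Connected) {k : ℕ} {u v : V} :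
    letI := pathMetricSpace hΓ
    k ≤ dist u v → ∃ w, dist u w = k ∧ dist w v = dist u v - k := by
  intro hk
  obtain ⟨l, hl⟩ := Nat.exists_eq_add_of_le (Nat.cast_le.1 hk)
  obtain ⟨w, huw, hwv⟩ := exists_dist_eq_of_add_eq_dist (hΓ u v) hl.symm
  refine ⟨w, congrArg Nat.cast huw, eq_sub_of_add_eq' ?_⟩
  change (k : ℝ) + Γ.dist w v = Γ.dist u v
  rw [hwv, hl, Nat.cast_add]

end Graph

/-- Locally elliptic actions of finitely generated groups on uniformly locally
finite Gromov hyperbolic graphs are elliptic. -/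
theorem hyperbolic_graph_locally_elliptic_implies_elliptic {V : Type*}
    (Γ : SimpleGraph V) (hconn : Γ.Connected)
    (D : ℕ) (hulf : ∀ v : V, (Γ.neighborSet v).Finite ∧ (Γ.neighborSet v).ncard ≤ D)
    (δ : ℝ) (hδ : 0 ≤ δ)
    (hhyp : ∀ x y z w : V,
      (Γ.dist x y : ℝ) + (Γ.dist z w : ℝ) ≤
        max ((Γ.dist x z : ℝ) + (Γ.dist y w : ℝ))
            ((Γ.dist x w : ℝ) + (Γ.dist y z : ℝ)) + 2 * δ)
    (G : Type*) [Group G] [Group.FG G] [MulAction G V]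
    (hact : ∀ (g : G) (u v : V), Γ.Adj (g • u) (g • v) ↔ Γ.Adj u v)
    (hle : ∀ (g : G) (x : V), ∃ C : ℕ, ∀ n : ℤ, Γ.dist x ((g ^ n) • x) ≤ C) :
    ∃ (x : V) (C : ℕ), ∀ g : G, Γ.dist x (g • x) ≤ C := by
  let := pathMetricSpace hconn
  have := isIsometricSMul_pathMetricSpace hconn hact
  have := hconn.nonempty
  have locallyElliptic : IsLocallyElliptic G V := isLocallyElliptic_iff.2 fun g x ↦
    let ⟨C, hC⟩ := hle g x
    ⟨C, fun n ↦ Nat.cast_le.2 (by simpa using hC n)⟩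
  have encard_neighborSet_le (v : V) : (Γ.neighborSet v).encard ≤ D :=
    (hulf v).1.cast_ncard_eq ▸ Nat.cast_le.2 (hulf v).2
  obtain ⟨K, hK⟩ := exists_nat_gt (3 * δ)
  obtain ⟨x, hx⟩ := IsGromovHyperbolic.exists_finite_orbit hhyp locallyElliptic hK
    (fun _ _ ↦ exists_dist_eq_of_le_dist hconn)
    (fun x ↦ (Set.encard_le_encard (closedBall_subset_ball hconn x _)).trans
      (encard_ball_le encard_neighborSet_le x _))
  obtain ⟨C, hC⟩ := (hx.image (Γ.dist x)).bddAbove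
  exact ⟨x, C, fun g ↦ hC ⟨g • x, MulAction.mem_orbit x g, rfl⟩⟩
end
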